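/- Fix a real p with 0 < p ≤ 1 and q = 1 − p, and let n ≥ 2 be an integer. Then Σ_{w ∈ (ℤ⁺)ⁿ} P(w)·sv(w) = p²·(1/(1−q²) − 1/(1−q³))·(n−2), where the sum over all words w of length n converges absolutely. In other words, the expected number of symmetric valleys in a sample of n geometric random variables is p²(1/(1−q²) − 1/(1−q³))(n−2). -/

import Mathlib

/-- The indices (0-based) of symmetric valleys of a list of naturals:
`i` is a symmetric valley if `L i > L (i+1)` and `L i = L (i+2)`. -/
def symValleyIdx (L : List ℕ) : Finset ℕ :=
  (Finset.range L.length).filter (fun i =>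
    i + 2 < L.length ∧ L.getD i 0 > L.getD (i+1) 0 ∧ L.getD i 0 = L.getD (i+2) 0)

/-- `sv w`: the number of symmetric valleys of `w`. -/
def svL (L : List ℕ) : ℕ := (symValleyIdx L).card

/-- The probability of the word `w` of length `n` with i.i.d. geometric letters:
`P(w) = ∏_{i} p·q^{wᵢ−1}`. -/
def wordP (p q : ℝ) {n : ℕ} (w : Fin n → ℕ+) : ℝ :=
  ∏ i : Fin n, p * q ^ ((w i : ℕ) - 1)

theorem HasSum.mul_of_nonneg {ι κ : Type*} {f : ι → ℝ} {g : κ → ℝ} {s t : ℝ}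
    (hf : HasSum f s) (hg : HasSum g t) (hf0 : ∀ i, 0 ≤ f i) (hg0 : ∀ j, 0 ≤ g j) :
    HasSum (fun x : ι × κ => f x.1 * g x.2) (s * t) :=
  hf.mul hg (hf.summable.mul_of_nonneg hg.summable hf0 hg0)

theorem svL_cons_cons_cons (a b c : ℕ) (l : List ℕ) :
    svL (a :: b :: c :: l) = svL (b :: c :: l) + if b < a ∧ a = c then 1 else 0 := by
  simp only [svL, symValleyIdx, Finset.card_filter]
  rw [List.length_cons, Finset.sum_range_succ']
  congr 1
  · refine Finset.sum_congr rfl fun i _ => ?_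
    simp only [List.getD_cons_succ, Nat.add_right_comm i 1, Nat.add_lt_add_iff_right]
  · simp

theorem wordP_cons (p q : ℝ) {n : ℕ} (a : ℕ+) (w : Fin n → ℕ+) :
    wordP p q (Fin.cons a w : Fin (n + 1) → ℕ+) = p * q ^ ((a : ℕ) - 1) * wordP p q w := by
  simp [wordP, Fin.prod_univ_succ]

theorem wordP_nonneg {p q : ℝ} (hp : 0 ≤ p) (hq : 0 ≤ q) {n : ℕ} (w : Fin n → ℕ+) :
    0 ≤ wordP p q w :=
  Finset.prod_nonneg fun _ _ => by positivity

/-- A sum over words of length `n + 1` may be taken over first letters and remaining words. -/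
theorem hasSum_fin_succ_iff {α : Type*} {n : ℕ} {F : (Fin (n + 1) → α) → ℝ} {s : ℝ} :
    HasSum F s ↔ HasSum (fun x : α × (Fin n → α) => F (Fin.cons x.1 x.2)) s :=
  (Fin.consEquiv fun _ : Fin (n + 1) => α).hasSum_iff.symm

theorem hasSum_geometric_letter {p : ℝ} (hp : 0 < p) (hp1 : p ≤ 1) :
    HasSum (fun a : ℕ+ => p * (1 - p) ^ ((a : ℕ) - 1)) 1 := by
  rw [← Equiv.pnatEquivNat.symm.hasSum_iff]
  have h := (hasSum_geometric_of_lt_one (sub_nonneg.2 hp1) (sub_lt_self 1 hp)).mul_left p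
  rw [sub_sub_cancel, mul_inv_cancel₀ hp.ne'] at h
  simpa [Function.comp_def] using h

theorem hasSum_wordP {p : ℝ} (hp : 0 < p) (hp1 : p ≤ 1) (n : ℕ) :
    HasSum (fun w : Fin n → ℕ+ => wordP p (1 - p) w) 1 := by
  have hq := sub_nonneg.2 hp1
  induction n with
  | zero => simp [wordP]
  | succ n ih =>
    rw [hasSum_fin_succ_iff]
    simp only [wordP_cons]
    have h := (hasSum_geometric_letter hp hp1).mul_of_nonneg ih
      (fun _ => by positivity) (wordP_nonneg hp.le hq)
    simpa using h

/-- The probability that three independent geometric letters form a symmetric valley. -/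
theorem hasSum_symmetric_valley {p : ℝ} (hp : 0 < p) (hp1 : p ≤ 1) :
    HasSum (fun x : ℕ+ × ℕ+ × ℕ+ =>
        p * (1 - p) ^ ((x.1 : ℕ) - 1) * (p * (1 - p) ^ ((x.2.1 : ℕ) - 1) *
          (p * (1 - p) ^ ((x.2.2 : ℕ) - 1))) *
          if (x.2.1 : ℕ) < x.1 ∧ (x.1 : ℕ) = x.2.2 then 1 else 0)
      (p ^ 2 * (1 / (1 - (1 - p) ^ 2) - 1 / (1 - (1 - p) ^ 3))) := by
  obtain ⟨q, rfl⟩ : ∃ q, p = 1 - q := ⟨1 - p, by ring⟩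
  simp only [sub_sub_cancel]
  have hq0 : 0 ≤ q := by linarith
  have hq1 : q < 1 := by linarith
  have h2 : q ^ 2 < 1 := pow_lt_one₀ hq0 hq1 (by norm_num)
  have h3 : q ^ 3 < 1 := pow_lt_one₀ hq0 hq1 (by norm_num)
  let e : ℕ × ℕ → ℕ+ × ℕ+ × ℕ+ := fun y =>
    ((y.1 + y.2 + 1).succPNat, y.2.succPNat, (y.1 + y.2 + 1).succPNat)
  have he : Function.Injective e := by
    rintro ⟨d, b⟩ ⟨d', b'⟩ h
    simp only [e, Prod.mk.injEq, Nat.succPNat_inj] at h ⊢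
    omega
  rw [← he.hasSum_iff]
  · have h := ((hasSum_geometric_of_lt_one (by positivity) h2).mul_of_nonneg
      (hasSum_geometric_of_lt_one (by positivity) h3)
      (fun _ => by positivity) (fun _ => by positivity)).mul_left ((1 - q) ^ 3 * q ^ 2)
    convert h using 1
    · rfl
    · funext ⟨d, b⟩
      have hlt : b < d + b + 1 := by omega
      simp only [e, Function.comp_apply, Nat.succPNat_coe, Nat.succ_eq_add_one,
        Nat.add_sub_cancel, Nat.add_lt_add_iff_right, hlt, and_self, if_true]
      ring
    · have h2' : 1 - q ^ 2 ≠ 0 := by linarith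
      have h3' : 1 - q ^ 3 ≠ 0 := by linarith
      field_simp
      ring
  · rintro ⟨a, b, c⟩ hx
    rw [if_neg, mul_zero]
    rintro ⟨hba, hac⟩
    refine hx ⟨((a : ℕ) - b - 1, (b : ℕ) - 1), ?_⟩
    have hb := b.pos
    simp only [e, Prod.mk.injEq, ← PNat.coe_inj, Nat.succPNat_coe]
    simp only at hba hac
    omega

theorem hasSum_wordP_mul_svL {p : ℝ} (hp : 0 < p) (hp1 : p ≤ 1) (m : ℕ) :
    HasSum (fun w : Fin (m + 2) → ℕ+ =>
        wordP p (1 - p) w * (svL (List.ofFn fun i => (w i : ℕ)) : ℝ))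
      (p ^ 2 * (1 / (1 - (1 - p) ^ 2) - 1 / (1 - (1 - p) ^ 3)) * m) := by
  have hq := sub_nonneg.2 hp1
  induction m with
  | zero =>
    have hsv (a b : ℕ) : svL [a, b] = 0 := by simp [svL, symValleyIdx]
    simp [hsv]
  | succ m ih =>
    have htail := (hasSum_geometric_letter hp hp1).mul_of_nonneg ih
      (fun _ => by positivity)
      (fun w => mul_nonneg (wordP_nonneg hp.le hq w) (Nat.cast_nonneg _))
    have hhead : HasSum (fun w : Fin (m + 3) → ℕ+ => wordP p (1 - p) w *
        if (w 1 : ℕ) < w 0 ∧ (w 0 : ℕ) = w 2 then 1 else 0)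
        (p ^ 2 * (1 / (1 - (1 - p) ^ 2) - 1 / (1 - (1 - p) ^ 3))) := by
      have h := (hasSum_symmetric_valley hp hp1).mul_of_nonneg (hasSum_wordP hp hp1 m)
        (fun x => by positivity) (wordP_nonneg hp.le hq)
      let e : (ℕ+ × ℕ+ × ℕ+) × (Fin m → ℕ+) ≃ (Fin (m + 3) → ℕ+) :=
        (Equiv.prodAssoc _ _ _).trans <|
          (Equiv.prodCongrRight fun _ => (Equiv.prodAssoc _ _ _).trans <|
            (Equiv.prodCongrRight fun _ => Fin.consEquiv fun _ => ℕ+).trans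
              (Fin.consEquiv fun _ => ℕ+)).trans (Fin.consEquiv fun _ => ℕ+)
      rw [← e.hasSum_iff]
      rw [mul_one] at h
      convert h using 1
      funext ⟨⟨a, b, c⟩, u⟩
      have hcons : e ((a, b, c), u) = Fin.cons a (Fin.cons b (Fin.cons c u)) := rfl
      have h0 : e ((a, b, c), u) 0 = a := rfl
      have h1 : e ((a, b, c), u) 1 = b := rfl
      have h2 : e ((a, b, c), u) 2 = c := rfl
      simp only [Function.comp_apply, h0, h1, h2]
      rw [hcons]
      simp only [wordP_cons]
      ring
    rw [hasSum_fin_succ_iff] at hhead ⊢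
    convert htail.add hhead using 1
    · funext ⟨a, w⟩
      have hsv : svL (List.ofFn fun i => ((Fin.cons a w : Fin (m + 3) → ℕ+) i : ℕ)) =
          svL (List.ofFn fun i => (w i : ℕ)) +
            if (w 0 : ℕ) < a ∧ (a : ℕ) = w 1 then 1 else 0 := by
        simp only [List.ofFn_succ, Fin.cons_zero, Fin.cons_succ]
        exact svL_cons_cons_cons _ _ _ _
      have h1 : (Fin.cons a w : Fin (m + 3) → ℕ+) 1 = w 0 := rfl
      have h2 : (Fin.cons a w : Fin (m + 3) → ℕ+) 2 = w 1 := rfl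
      simp only [hsv, h1, h2, wordP_cons, Fin.cons_zero]
      push_cast
      ring
    · push_cast
      ring

/-- For `0 < p ≤ 1`, `q = 1 − p`, and `n ≥ 2`, the expected number of symmetric valleys
in a sample of `n` geometric random variables is `p²(1/(1−q²) − 1/(1−q³))(n−2)`; the sum
over all words converges (absolutely, as all terms are nonnegative). -/
theorem expected_symmetric_valleys (p q : ℝ) (hp : 0 < p) (hp1 : p ≤ 1) (hq : q = 1 - p)
    (n : ℕ) (hn : 2 ≤ n) :
    Summable (fun w : Fin n → ℕ+ =>
      wordP p q w * (svL (List.ofFn fun i => (w i : ℕ)) : ℝ)) ∧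
    ∑' w : Fin n → ℕ+, wordP p q w * (svL (List.ofFn fun i => (w i : ℕ)) : ℝ)
      = p ^ 2 * (1 / (1 - q ^ 2) - 1 / (1 - q ^ 3)) * ((n : ℝ) - 2) := by
  subst hq
  obtain ⟨m, rfl⟩ := Nat.exists_eq_add_of_le' hn
  have h := hasSum_wordP_mul_svL hp hp1 m
  refine ⟨h.summable, h.tsum_eq.trans ?_⟩
  push_cast
  ring
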